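/- Fix constants C_{β₀}, C_u, C₁, C₂, C_η, c_η > 0 with C_η > c_η and c_η < √((1/2)·min{τ², (1−τ)²}). Then the asymptotic program min over (|β₀| ≤ C_{β₀}, 0 ≤ M_u ≤ C_u, 0 ≤ ρ₁ ≤ C₁) of max over (0 < ρ₂ ≤ C₂, c_η ≤ M_η ≤ C_η) of A(β₀, M_u, ρ₁, M_η, ρ₂) admits a unique minimizing triple (β₀*, M_u*, ρ₁*). Moreover, if M_u* > 0 then ρ₁* > 0. -/

import Mathlib

open MeasureTheory ProbabilityTheory Filter Finset

noncomputable section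

/-- The pinball (quantile) loss `ℓ_τ(r) = τ·r − min{r, 0}`. -/
def pinball (τ r : ℝ) : ℝ := τ * r - min r 0

/-- The Moreau envelope of a scalar function, `e_f(x; ρ) = inf_v (x − v)²/(2ρ) + f(v)` for
`ρ > 0`, continuously extended by `e_f(x; 0) = f(x)`. -/
def moreau (f : ℝ → ℝ) (x ρ : ℝ) : ℝ :=
  if ρ = 0 then f x else ⨅ v : ℝ, ((x - v) ^ 2 / (2 * ρ) + f v)

/-- The convex (Fenchel) conjugate of a scalar function, with values in `EReal`. -/
def conjE (f : ℝ → ℝ) (x : ℝ) : EReal := ⨆ v : ℝ, ((v * x - f v : ℝ) : EReal)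

/-- The Moreau envelope of the convex conjugate `f*` of a scalar function `f`. -/
def moreauConj (f : ℝ → ℝ) (x ρ : ℝ) : ℝ :=
  (⨅ v : ℝ, ((((x - v) ^ 2 / (2 * ρ) : ℝ) : EReal) + conjE f v)).toReal

/-- Assumptions on the noise distribution `P_ε`: mean zero, finite second moment and a bounded,
continuous density that is positive on all of `ℝ` (hence, in particular, continuous). -/
structure NoiseAssumption (Pε : Measure ℝ) : Prop where
  mean_zero : ∫ x, x ∂Pε = 0
  second_moment : Integrable (fun x => x ^ 2) Pε
  density : ∃ f : ℝ → ℝ, Continuous f ∧ (∀ x, 0 < f x) ∧ (∃ C, ∀ x, f x ≤ C) ∧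
    Pε = volume.withDensity fun x => ENNReal.ofReal (f x)

/-- The deterministic asymptotic objective
`A(β₀, M_u, ρ₁, M_η, ρ₂) = E[e_{ℓ_τ}(M_u g₁ + ε₁ − β₀; ρ₁/M_η)] − M_η² M_u γ/(2ρ₂)
  + γ E[e_ν((M_η M_u/ρ₂) h₁ + γ √d β̃₁; M_u/ρ₂)] + M_η ρ₁/2 − M_u ρ₂/2`,
where `(g₁, ε₁) ∼ N(0,1) ⊗ P_ε` and `(h₁, √d β̃₁) ∼ N(0,1) ⊗ P_β`. -/
def asymObj (τ γ : ℝ) (Pε Pβ : Measure ℝ) (ν : ℝ → ℝ) (β₀ Mu ρ₁ Mη ρ₂ : ℝ) : ℝ :=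
  (∫ z, moreau (pinball τ) (Mu * z.1 + z.2 - β₀) (ρ₁ / Mη) ∂((gaussianReal 0 1).prod Pε))
    - Mη ^ 2 * Mu * γ / (2 * ρ₂)
    + γ * (∫ z, moreau ν (Mη * Mu / ρ₂ * z.1 + γ * z.2) (Mu / ρ₂)
        ∂((gaussianReal 0 1).prod Pβ))
    + Mη * ρ₁ / 2 - Mu * ρ₂ / 2

/-- The inner maximum of the asymptotic objective over `M_η ∈ [c_η, C_η]` and `ρ₂ ∈ (0, C₂]`,
as a function of `(β₀, M_u, ρ₁)`. -/
def asymFmax (τ γ : ℝ) (Pε Pβ : Measure ℝ) (ν : ℝ → ℝ) (cη Cη C₂ : ℝ)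
    (p : ℝ × ℝ × ℝ) : ℝ :=
  sSup ((fun q : ℝ × ℝ => asymObj τ γ Pε Pβ ν p.1 p.2.1 p.2.2 q.1 q.2) ''
    (Set.Icc cη Cη ×ˢ Set.Ioc (0 : ℝ) C₂))

/-- The constraint box `{|β₀| ≤ C_{β₀}} × {0 ≤ M_u ≤ C_u} × {0 ≤ ρ₁ ≤ C₁}` of the outer
minimization of the asymptotic program. -/
def asymBox (Cβ0 Cu C₁ : ℝ) : Set (ℝ × ℝ × ℝ) :=
  Set.Icc (-Cβ0) Cβ0 ×ˢ Set.Icc (0 : ℝ) Cu ×ˢ Set.Icc (0 : ℝ) C₁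

/-- Parts (v) and (vi) of the regularizer assumption, stated for the limiting scalar penalty `ν`:
there exist a.e. first and second derivatives `D1, D2` of `x ↦ e_{ν*}(x; ρ)` satisfying the
differentiation-under-the-integral / Stein identities, and the expected second derivative is
bounded away from zero on compacts. -/
def ConjDerivAssumption (γ : ℝ) (Pβ : Measure ℝ) (ν : ℝ → ℝ) : Prop :=
  ∃ D1 D2 : ℝ → ℝ → ℝ,
    (∀ ρ > (0 : ℝ),
      (∀ᵐ x ∂(volume : Measure ℝ), HasDerivAt (fun t => moreauConj ν t ρ) (D1 x ρ) x) ∧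
      (∀ᵐ x ∂(volume : Measure ℝ), HasDerivAt (fun t => D1 t ρ) (D2 x ρ) x) ∧
      (∀ c : ℝ,
        HasDerivAt (fun c' => ∫ z, moreauConj ν (c' * z.1 + ρ * γ * z.2) ρ
            ∂((gaussianReal 0 1).prod Pβ))
          (∫ z, z.1 * D1 (c * z.1 + ρ * γ * z.2) ρ ∂((gaussianReal 0 1).prod Pβ)) c ∧
        (∫ z, z.1 * D1 (c * z.1 + ρ * γ * z.2) ρ ∂((gaussianReal 0 1).prod Pβ))
          = c * ∫ z, D2 (c * z.1 + ρ * γ * z.2) ρ ∂((gaussianReal 0 1).prod Pβ))) ∧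
    (∀ A : Set ℝ, IsCompact A → A ⊆ Set.Ioi 0 → ∀ Cρ > (0 : ℝ), ∃ m > (0 : ℝ),
      ∀ c ∈ A, ∀ ρ ∈ Set.Ioc (0 : ℝ) Cρ,
        m ≤ ∫ z, D2 (c * z.1 + ρ * γ * z.2) ρ ∂((gaussianReal 0 1).prod Pβ))

/-!
For fixed `(M_η, ρ₂)` the objective is a loss term in `(β₀, M_u, ρ₁ / M_η)` plus terms convex in
`(M_u, ρ₁)`. The loss term is strictly convex: equality in Jensen's inequality for a pinball
envelope at almost every, hence every, value of `(g, ε)` forces the two parameter triples to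
coincide. Since its convexity gap is continuous in `M_η`, which ranges over a compact interval,
strict convexity survives the inner maximum; lower semicontinuity and compactness of the box then
give a unique minimizer.

If `M_u > 0` and `ρ₁ = 0`, a small increase `t` of `ρ₁` strictly lowers the inner maximum. The loss
drops by about `min(τ, 1-τ)² t / (2 M_η)`, which beats the added `M_η t / 2` when `M_η` is close to
`c_η`; for larger `M_η` the objective at `ρ₁ = 0` is already smaller than at `M_η = c_η` by a
multiple of `M_η² - c_η²`, since by Moreau's identity it depends on `M_η` only through minus an
expected envelope of `ν*`, whose derivative in `M_η` is bounded below by a multiple of `M_η`.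
-/

/-- `s` is a subgradient of `f : ℝ → ℝ` at `v`, in the sense of convex analysis. -/
def IsSubgradient (f : ℝ → ℝ) (v s : ℝ) : Prop := ∀ w, f v + s * (w - v) ≤ f w

section Moreau

variable {f : ℝ → ℝ} {v s ρ : ℝ}

@[simp]
lemma moreau_zero (f : ℝ → ℝ) (x : ℝ) : moreau f x 0 = f x := if_pos rfl

lemma exists_isSubgradient (hf : ConvexOn ℝ Set.univ f) (v : ℝ) : ∃ s, IsSubgradient f v s := by
  have hv : v ∈ interior (Set.univ : Set ℝ) := by simp
  refine ⟨derivWithin f (Set.Ioi v) v, fun w => ?_⟩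
  rcases lt_trichotomy w v with hw | rfl | hw
  · have h := (hf.slope_le_leftDeriv_of_mem_interior (Set.mem_univ w) hv hw).trans
      (hf.leftDeriv_le_rightDeriv_of_mem_interior hv)
    rw [slope_def_field, div_le_iff₀ (sub_pos.2 hw)] at h
    linarith
  · simp
  · have h := hf.rightDeriv_le_slope_of_mem_interior hv (Set.mem_univ w) hw
    rw [slope_def_field, le_div_iff₀ (sub_pos.2 hw)] at h
    linarith

lemma IsSubgradient.le_sq_div_add (h : IsSubgradient f v s) (hρ : 0 < ρ) (x w : ℝ) :
    f v + s * (x - v) - ρ * s ^ 2 / 2 ≤ (x - w) ^ 2 / (2 * ρ) + f w := by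
  have hsq : 0 ≤ (x - w - ρ * s) ^ 2 / (2 * ρ) := by positivity
  have hexpand : (x - w - ρ * s) ^ 2 / (2 * ρ)
      = (x - w) ^ 2 / (2 * ρ) - s * (x - w) + ρ * s ^ 2 / 2 := by
    field_simp
    ring
  linarith [h w]

lemma IsSubgradient.le_moreau (h : IsSubgradient f v s) (hρ : 0 ≤ ρ) (x : ℝ) :
    f v + s * (x - v) - ρ * s ^ 2 / 2 ≤ moreau f x ρ := by
  rcases hρ.eq_or_lt with rfl | hρ
  · simpa using h x
  · rw [moreau, if_neg hρ.ne']
    exact le_ciInf (h.le_sq_div_add hρ x)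

lemma moreau_add_mul_le (hf : ConvexOn ℝ Set.univ f) (hρ : 0 ≤ ρ) (v t : ℝ) :
    moreau f (v + ρ * t) ρ ≤ f v + ρ * t ^ 2 / 2 := by
  rcases hρ.eq_or_lt with rfl | hρ
  · simp
  · rw [moreau, if_neg hρ.ne']
    obtain ⟨s, hs⟩ := exists_isSubgradient hf v
    refine (ciInf_le ⟨_, Set.forall_mem_range.2 (hs.le_sq_div_add hρ _)⟩ v).trans_eq ?_
    field_simp
    ring

lemma moreau_le_moreau_zero (hf : ConvexOn ℝ Set.univ f) (hρ : 0 ≤ ρ) (x : ℝ) :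
    moreau f x ρ ≤ moreau f x 0 := by
  simpa using moreau_add_mul_le hf hρ x 0

lemma IsSubgradient.moreau_add_mul (h : IsSubgradient f v s) (hf : ConvexOn ℝ Set.univ f)
    (hρ : 0 ≤ ρ) : moreau f (v + ρ * s) ρ = f v + ρ * s ^ 2 / 2 := by
  refine (moreau_add_mul_le hf hρ v s).antisymm (le_of_eq_of_le ?_ (h.le_moreau hρ _))
  ring

lemma exists_forall_sq_div_add_le (hf : ConvexOn ℝ Set.univ f) (hρ : 0 < ρ) (x : ℝ) :
    ∃ v, ∀ w, (x - v) ^ 2 / (2 * ρ) + f v ≤ (x - w) ^ 2 / (2 * ρ) + f w := by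
  have hcont : Continuous f := by
    simpa only [continuousOn_univ] using hf.continuousOn isOpen_univ
  obtain ⟨s, hs⟩ := exists_isSubgradient hf x
  refine Continuous.exists_forall_le (by fun_prop) ?_
  have hcoercive : Tendsto (fun w => f x + dist w x * (dist w x / (2 * ρ) - |s|))
      (cocompact ℝ) atTop := by
    refine tendsto_atTop_add_const_left _ _ ?_
    have hdist := tendsto_dist_right_cocompact_atTop x
    exact hdist.atTop_mul_atTop₀ (tendsto_atTop_add_const_right _ _
      (hdist.atTop_div_const (by positivity)))
  refine tendsto_atTop_mono (fun w => ?_) hcoercive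
  have hslope : -(|s| * |w - x|) ≤ s * (w - x) := by
    rw [← abs_mul]
    exact neg_abs_le _
  have hsq : |w - x| * (|w - x| / (2 * ρ)) = (x - w) ^ 2 / (2 * ρ) := by
    rw [mul_div_assoc', abs_mul_abs_self]
    ring
  rw [Real.dist_eq, mul_sub, hsq]
  linarith [hs w]

lemma isSubgradient_of_forall_sq_div_add_le (hf : ConvexOn ℝ Set.univ f) (hρ : 0 < ρ) {x : ℝ}
    (hv : ∀ w, (x - v) ^ 2 / (2 * ρ) + f v ≤ (x - w) ^ 2 / (2 * ρ) + f w) :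
    IsSubgradient f v ((x - v) / ρ) := by
  intro w
  have hsegment : ∀ t ∈ Set.Ioo (0 : ℝ) 1,
      (x - v) / ρ * (w - v) - t * ((w - v) ^ 2 / (2 * ρ)) ≤ f w - f v := by
    intro t ht
    have hconv : f (v + t * (w - v)) ≤ (1 - t) * f v + t * f w := by
      have h := hf.2 (Set.mem_univ v) (Set.mem_univ w) (sub_nonneg.2 ht.2.le) ht.1.le
        (sub_add_cancel 1 t)
      simp only [smul_eq_mul] at h
      rwa [show (1 - t) * v + t * w = v + t * (w - v) by ring] at h
    refine le_of_mul_le_mul_left ?_ ht.1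
    have hexpand : (x - v) ^ 2 / (2 * ρ) - (x - (v + t * (w - v))) ^ 2 / (2 * ρ)
        = t * ((x - v) / ρ * (w - v) - t * ((w - v) ^ 2 / (2 * ρ))) := by
      field_simp
      ring
    linarith [hv (v + t * (w - v))]
  have hlim : Tendsto (fun t : ℝ => (x - v) / ρ * (w - v) - t * ((w - v) ^ 2 / (2 * ρ)))
      (nhdsWithin 0 (Set.Ioi 0)) (nhds ((x - v) / ρ * (w - v))) := by
    refine tendsto_nhdsWithin_of_tendsto_nhds (Continuous.tendsto' (by fun_prop) _ _ (by ring))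
  have := le_of_tendsto hlim
    (mem_of_superset (Ioo_mem_nhdsGT one_pos) hsegment)
  linarith

lemma exists_add_mul_eq_and_isSubgradient (hf : ConvexOn ℝ Set.univ f) (hρ : 0 ≤ ρ) (x : ℝ) :
    ∃ v s, v + ρ * s = x ∧ IsSubgradient f v s := by
  rcases hρ.eq_or_lt with rfl | hρ
  · obtain ⟨s, hs⟩ := exists_isSubgradient hf x
    exact ⟨x, s, by ring, hs⟩
  · obtain ⟨v, hv⟩ := exists_forall_sq_div_add_le hf hρ x
    exact ⟨v, (x - v) / ρ, by field_simp; ring,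
      isSubgradient_of_forall_sq_div_add_le hf hρ hv⟩

lemma convexOn_moreau (hf : ConvexOn ℝ Set.univ f) :
    ConvexOn ℝ (Set.univ ×ˢ Set.Ici 0) (fun q : ℝ × ℝ => moreau f q.1 q.2) := by
  refine ⟨convex_univ.prod (convex_Ici 0), ?_⟩
  rintro ⟨x, ρ⟩ ⟨-, hρ⟩ ⟨x', ρ'⟩ ⟨-, hρ'⟩ a b ha hb hab
  simp only [Set.mem_Ici] at hρ hρ'
  simp only [Prod.smul_mk, Prod.mk_add_mk, smul_eq_mul]
  obtain ⟨v, s, hx, hs⟩ := exists_add_mul_eq_and_isSubgradient hf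
    (by positivity : 0 ≤ a * ρ + b * ρ') (a * x + b * x')
  rw [← hx, hs.moreau_add_mul hf (by positivity)]
  calc f v + (a * ρ + b * ρ') * s ^ 2 / 2
      = a * (f v + s * (x - v) - ρ * s ^ 2 / 2)
        + b * (f v + s * (x' - v) - ρ' * s ^ 2 / 2) := by
        obtain rfl : b = 1 - a := by linarith
        linear_combination s * hx
    _ ≤ a * moreau f x ρ + b * moreau f x' ρ' := by
        gcongr <;> exact hs.le_moreau ‹_› _

lemma IsSubgradient.conjE_eq (h : IsSubgradient f v s) :
    conjE f s = ((v * s - f v : ℝ) : EReal) := by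
  refine le_antisymm (iSup_le fun w => EReal.coe_le_coe_iff.2 ?_)
    (le_iSup (fun w => ((w * s - f w : ℝ) : EReal)) v)
  linarith [h w]

lemma moreauConj_eq_sub_moreau (hf : ConvexOn ℝ Set.univ f) (hρ : 0 < ρ) (x : ℝ) :
    moreauConj f x ρ = x ^ 2 / (2 * ρ) - moreau f (x / ρ) (1 / ρ) := by
  obtain ⟨v, s, hx, hs⟩ :=
    exists_add_mul_eq_and_isSubgradient hf (one_div_pos.2 hρ).le (x / ρ)
  have hx' : x = ρ * v + s := by
    field_simp at hx
    linarith
  have hinf : ⨅ t : ℝ, ((((x - t) ^ 2 / (2 * ρ) : ℝ) : EReal) + conjE f t)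
      = ((ρ * v ^ 2 / 2 + (v * s - f v) : ℝ) : EReal) := by
    refine le_antisymm ((iInf_le _ s).trans_eq ?_) (le_iInf fun t => ?_)
    · rw [hs.conjE_eq, ← EReal.coe_add, hx']
      congr 2
      field_simp
      ring
    · refine le_trans ?_ (add_le_add_right (le_iSup (fun w => ((w * t - f w : ℝ) : EReal)) v) _)
      rw [← EReal.coe_add, EReal.coe_le_coe_iff]
      have hsq : 0 ≤ (s - t) ^ 2 / (2 * ρ) := by positivity
      have hexpand : (x - t) ^ 2 / (2 * ρ)
          = (s - t) ^ 2 / (2 * ρ) + v * (s - t) + ρ * v ^ 2 / 2 := by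
        rw [hx']
        field_simp
        ring
      linarith
  rw [moreauConj, hinf, EReal.toReal_coe, ← hx, hs.moreau_add_mul hf (by positivity), hx']
  field_simp
  ring

end Moreau

section Pinball

variable {τ x x' ρ ρ' : ℝ}

lemma convexOn_pinball (τ : ℝ) : ConvexOn ℝ Set.univ (pinball τ) :=
  ((LinearMap.mulLeft ℝ τ).convexOn convex_univ).sub
    ((concaveOn_id convex_univ).inf (concaveOn_const 0 convex_univ))

lemma isSubgradient_pinball_zero {s : ℝ} (hs : s ∈ Set.Icc (τ - 1) τ) :
    IsSubgradient (pinball τ) 0 s := by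
  intro w
  have : s * w ≤ τ * w - min w 0 := by
    rcases le_total w 0 with hw | hw
    · rw [min_eq_left hw]
      nlinarith [hs.1]
    · rw [min_eq_right hw]
      nlinarith [hs.2]
  simpa [pinball] using this

lemma IsSubgradient.mem_Icc_of_pinball {v s : ℝ} (h : IsSubgradient (pinball τ) v s) :
    s ∈ Set.Icc (τ - 1) τ := by
  have hleft := h (v - 1)
  have hright := h (v + 1)
  have hl : min v 0 - 1 ≤ min (v - 1) 0 := by
    rcases le_total v 0 with hv | hv
    · rw [min_eq_left hv, min_eq_left (by linarith)]
    · rw [min_eq_right hv]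
      exact le_min (by linarith) (by norm_num)
  have hr : min v 0 ≤ min (v + 1) 0 := min_le_min_right _ (by linarith)
  simp only [pinball] at hleft hright
  constructor <;> linarith

lemma IsSubgradient.pinball_eq_mul {v s : ℝ} (h : IsSubgradient (pinball τ) v s) :
    pinball τ v = s * v := by
  have hzero := h 0
  have hdouble := h (2 * v)
  have hmin : min (2 * v) 0 = 2 * min v 0 := by
    rw [mul_min_of_nonneg _ _ zero_le_two, mul_zero]
  simp only [pinball, hmin, min_self] at *
  linarith

lemma isGreatest_moreau_pinball (τ x : ℝ) (hρ : 0 ≤ ρ) :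
    IsGreatest ((fun s => s * x - ρ * s ^ 2 / 2) '' Set.Icc (τ - 1) τ)
      (moreau (pinball τ) x ρ) := by
  have hconv := convexOn_pinball τ
  constructor
  · obtain ⟨v, s, rfl, hs⟩ := exists_add_mul_eq_and_isSubgradient hconv hρ x
    refine ⟨s, hs.mem_Icc_of_pinball, ?_⟩
    rw [hs.moreau_add_mul hconv hρ, hs.pinball_eq_mul]
    ring
  · rintro _ ⟨s, hs, rfl⟩
    have h := (isSubgradient_pinball_zero hs).le_moreau hρ x
    simpa [pinball] using h

lemma moreau_pinball_le_add (hτ : τ ∈ Set.Icc (0 : ℝ) 1) (hρ : 0 ≤ ρ) (hρ' : 0 ≤ ρ') :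
    moreau (pinball τ) x ρ ≤ moreau (pinball τ) x' ρ' + (|x - x'| + |ρ - ρ'|) := by
  obtain ⟨s, hs, hmax⟩ := (isGreatest_moreau_pinball τ x hρ).1
  have hle := (isGreatest_moreau_pinball τ x' hρ').2 ⟨s, hs, rfl⟩
  have hs1 : |s| ≤ 1 := abs_le.2 ⟨by linarith [hs.1, hτ.1], hs.2.trans hτ.2⟩
  have hs2 : s ^ 2 ≤ 1 := (sq_le_one_iff_abs_le_one s).2 hs1
  have hx : s * (x - x') ≤ |x - x'| := by
    refine (le_abs_self _).trans ?_
    rw [abs_mul]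
    exact mul_le_of_le_one_left (abs_nonneg _) hs1
  have hρρ' : -((ρ - ρ') * s ^ 2) ≤ |ρ - ρ'| := by
    nlinarith [neg_abs_le (ρ - ρ'), abs_nonneg (ρ - ρ'), sq_nonneg s]
  rw [← hmax]
  simp only at hle
  linarith [abs_nonneg (ρ - ρ')]

lemma abs_moreau_pinball_sub_le (hτ : τ ∈ Set.Icc (0 : ℝ) 1) (hρ : 0 ≤ ρ) (hρ' : 0 ≤ ρ') :
    |moreau (pinball τ) x ρ - moreau (pinball τ) x' ρ'| ≤ |x - x'| + |ρ - ρ'| := by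
  have h := moreau_pinball_le_add (x := x) (x' := x') hτ hρ hρ'
  have h' := moreau_pinball_le_add (x := x') (x' := x) hτ hρ' hρ
  rw [abs_sub_comm x', abs_sub_comm ρ'] at h'
  rw [abs_le]
  constructor <;> linarith

lemma eq_mul_of_moreau_pinball_eq {t : ℝ} (ht : t ∈ Set.Ioo (τ - 1) τ) (hρ : 0 ≤ ρ)
    (h : moreau (pinball τ) x ρ = t * x - ρ * t ^ 2 / 2) : x = ρ * t := by
  have hmax : IsLocalMax (fun s => s * x - ρ * s ^ 2 / 2) t := by
    filter_upwards [Icc_mem_nhds ht.1 ht.2] with s hs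
    rw [← h]
    exact (isGreatest_moreau_pinball τ x hρ).2 ⟨s, hs, rfl⟩
  have hderiv : HasDerivAt (fun s => s * x - ρ * s ^ 2 / 2) (x - ρ * t) t := by
    have h := ((hasDerivAt_id t).mul_const x).sub
      (((hasDerivAt_pow 2 t).const_mul ρ).div_const 2)
    exact h.congr_deriv (by simp; ring)
  exact sub_eq_zero.1 (hmax.hasDerivAt_eq_zero hderiv)

lemma eq_mul_of_moreau_pinball_combo_eq {t a b : ℝ} (ht : t ∈ Set.Ioo (τ - 1) τ)
    (ha : 0 < a) (hb : 0 < b) (hρ : 0 ≤ ρ) (hρ' : 0 ≤ ρ')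
    (hx : a * x + b * x' = (a * ρ + b * ρ') * t)
    (h : moreau (pinball τ) (a * x + b * x') (a * ρ + b * ρ')
      = a * moreau (pinball τ) x ρ + b * moreau (pinball τ) x' ρ') :
    x = ρ * t ∧ x' = ρ' * t := by
  have htmem := Set.Ioo_subset_Icc_self ht
  have hle := (isGreatest_moreau_pinball τ x hρ).2 ⟨t, htmem, rfl⟩
  have hle' := (isGreatest_moreau_pinball τ x' hρ').2 ⟨t, htmem, rfl⟩
  have hmid : moreau (pinball τ) (a * x + b * x') (a * ρ + b * ρ')
      = (a * ρ + b * ρ') * t ^ 2 / 2 := by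
    have hsub := (isSubgradient_pinball_zero htmem).moreau_add_mul (convexOn_pinball τ)
      (by positivity : 0 ≤ a * ρ + b * ρ')
    rw [hx]
    simpa [pinball] using hsub
  have hsum : a * (t * x - ρ * t ^ 2 / 2) + b * (t * x' - ρ' * t ^ 2 / 2)
      = a * moreau (pinball τ) x ρ + b * moreau (pinball τ) x' ρ' := by
    rw [← h, hmid]
    linear_combination t * hx
  have hle₁ := mul_le_mul_of_nonneg_left hle ha.le
  have hle₂ := mul_le_mul_of_nonneg_left hle' hb.le
  simp only at hle₁ hle₂
  exact ⟨eq_mul_of_moreau_pinball_eq ht hρ (mul_left_cancel₀ ha.ne' (by linarith)),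
    eq_mul_of_moreau_pinball_eq ht hρ' (mul_left_cancel₀ hb.ne' (by linarith))⟩

lemma moreau_pinball_le_of_le_abs (hτ : τ ∈ Set.Icc (0 : ℝ) 1) (hρ : 0 ≤ ρ) (hx : ρ ≤ |x|) :
    moreau (pinball τ) x ρ ≤ moreau (pinball τ) x 0 - ρ / 2 * min τ (1 - τ) ^ 2 := by
  have hk : 0 ≤ min τ (1 - τ) := le_min hτ.1 (sub_nonneg.2 hτ.2)
  rcases abs_cases x with ⟨habs, -⟩ | ⟨habs, -⟩ <;> rw [habs] at hx
  · have hv : 0 ≤ x - ρ * τ := by nlinarith [hτ.2]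
    have h := moreau_add_mul_le (convexOn_pinball τ) hρ (x - ρ * τ) τ
    have hsq : ρ / 2 * min τ (1 - τ) ^ 2 ≤ ρ / 2 * τ ^ 2 := by
      gcongr
      exact min_le_left _ _
    simp only [moreau_zero, pinball, sub_add_cancel, min_eq_right hv,
      min_eq_right (hρ.trans hx)] at h ⊢
    linarith
  · have hv : x - ρ * (τ - 1) ≤ 0 := by nlinarith [hτ.1]
    have h := moreau_add_mul_le (convexOn_pinball τ) hρ (x - ρ * (τ - 1)) (τ - 1)
    have hsq : ρ / 2 * min τ (1 - τ) ^ 2 ≤ ρ / 2 * (1 - τ) ^ 2 := by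
      gcongr
      exact min_le_right _ _
    simp only [moreau_zero, pinball, sub_add_cancel, min_eq_left hv,
      min_eq_left (show x ≤ 0 by linarith)] at h ⊢
    linarith

end Pinball

/-- The Moreau-smoothed pinball loss `e_{ℓ_τ}(M g + ε - β; ρ)` with parameter `p = (β, M, ρ)` at
the sample `z = (g, ε)`. -/
def smoothedPinball (τ : ℝ) (p : ℝ × ℝ × ℝ) (z : ℝ × ℝ) : ℝ :=
  moreau (pinball τ) (p.2.1 * z.1 + z.2 - p.1) p.2.2

/-- The loss term `E[e_{ℓ_τ}(M g + ε - β; ρ)]` of the asymptotic objective, as a function of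
`p = (β, M, ρ)`, where `P` is the joint law of `(g, ε)`. -/
def pinballRisk (τ : ℝ) (P : Measure (ℝ × ℝ)) (p : ℝ × ℝ × ℝ) : ℝ :=
  ∫ z, smoothedPinball τ p z ∂P

section PinballRisk

variable {τ : ℝ} {p p' : ℝ × ℝ × ℝ} {P : Measure (ℝ × ℝ)}

lemma continuous_smoothedPinball (hτ : τ ∈ Set.Icc (0 : ℝ) 1) (hp : 0 ≤ p.2.2) :
    Continuous (smoothedPinball τ p) := by
  have hlip : LipschitzWith (Real.toNNReal 1) (fun x => moreau (pinball τ) x p.2.2) :=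
    LipschitzWith.of_dist_le' fun x x' => by
      simpa [Real.dist_eq] using abs_moreau_pinball_sub_le (x := x) (x' := x') hτ hp hp
  exact hlip.continuous.comp (by fun_prop)

lemma abs_smoothedPinball_sub_le (hτ : τ ∈ Set.Icc (0 : ℝ) 1) (hp : 0 ≤ p.2.2)
    (hp' : 0 ≤ p'.2.2) (z : ℝ × ℝ) :
    |smoothedPinball τ p z - smoothedPinball τ p' z| ≤ (|z.1| + 2) * dist p p' := by
  have hβ : |p.1 - p'.1| ≤ dist p p' := le_max_left _ _
  have hM : |p.2.1 - p'.2.1| ≤ dist p p' := (le_max_left _ _).trans (le_max_right _ _)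
  have hρ : |p.2.2 - p'.2.2| ≤ dist p p' := (le_max_right _ _).trans (le_max_right _ _)
  have hX : |p.2.1 * z.1 + z.2 - p.1 - (p'.2.1 * z.1 + z.2 - p'.1)|
      ≤ |z.1| * |p.2.1 - p'.2.1| + |p.1 - p'.1| := by
    rw [← abs_mul]
    refine (congrArg abs ?_).trans_le (abs_sub _ _)
    ring
  have hM' := mul_le_mul_of_nonneg_left hM (abs_nonneg z.1)
  refine (abs_moreau_pinball_sub_le hτ hp hp').trans ?_
  linarith

lemma integrable_smoothedPinball [IsFiniteMeasure P] (hτ : τ ∈ Set.Icc (0 : ℝ) 1)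
    (hfst : Integrable Prod.fst P) (hsnd : Integrable Prod.snd P) (hp : 0 ≤ p.2.2) :
    Integrable (smoothedPinball τ p) P := by
  have hX : Integrable (fun z : ℝ × ℝ => p.2.1 * z.1 + z.2 - p.1) P :=
    ((hfst.const_mul _).add hsnd).sub (integrable_const _)
  refine (hX.norm.add (integrable_const p.2.2)).mono'
    (continuous_smoothedPinball hτ hp).aestronglyMeasurable (Eventually.of_forall fun z => ?_)
  have h := abs_moreau_pinball_sub_le (x := p.2.1 * z.1 + z.2 - p.1) (x' := 0) hτ hp le_rfl
  simpa [smoothedPinball, pinball, abs_of_nonneg hp] using h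

lemma convexOn_smoothedPinball (τ : ℝ) (z : ℝ × ℝ) :
    ConvexOn ℝ {p : ℝ × ℝ × ℝ | 0 ≤ p.2.2} (fun p => smoothedPinball τ p z) := by
  refine ⟨(convex_Ici (0 : ℝ)).is_linear_preimage
    ((LinearMap.snd ℝ ℝ ℝ).comp (LinearMap.snd ℝ ℝ (ℝ × ℝ))).isLinear,
    fun p hp p' hp' a b ha hb hab => ?_⟩
  have h := (convexOn_moreau (convexOn_pinball τ)).2
    (Set.mk_mem_prod (Set.mem_univ (p.2.1 * z.1 + z.2 - p.1)) hp)
    (Set.mk_mem_prod (Set.mem_univ (p'.2.1 * z.1 + z.2 - p'.1)) hp') ha hb hab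
  refine le_of_eq_of_le ?_ h
  simp only [smoothedPinball, Prod.fst_add, Prod.snd_add, Prod.smul_fst, Prod.smul_snd,
    smul_eq_mul]
  congr 1
  linear_combination -z.2 * hab

lemma eq_of_forall_smoothedPinball_combo_eq {a b : ℝ} (hp : 0 ≤ p.2.2)
    (hp' : 0 ≤ p'.2.2) (ha : 0 < a) (hb : 0 < b) (hab : a + b = 1)
    (h : ∀ z, smoothedPinball τ (a • p + b • p') z
      = a * smoothedPinball τ p z + b * smoothedPinball τ p' z) :
    p = p' := by
  obtain ⟨β, M, ρ⟩ := p
  obtain ⟨β', M', ρ'⟩ := p'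
  simp only [smoothedPinball, Prod.smul_mk, Prod.mk_add_mk, smul_eq_mul] at h hp hp'
  have hlinear : ∀ g, ∀ t ∈ Set.Ioo (τ - 1) τ, (M - M') * g - (β - β') = (ρ - ρ') * t := by
    intro g t ht
    -- For this `e` the combined residual is `(a ρ + b ρ') t`, so the envelope there has slope `t`.
    set e : ℝ := (a * ρ + b * ρ') * t - (a * M + b * M') * g + (a * β + b * β') with he
    have hcombo : a * (M * g + e - β) + b * (M' * g + e - β')
        = (a * M + b * M') * g + e - (a * β + b * β') := by
      linear_combination e * hab
    obtain ⟨hx, hx'⟩ := eq_mul_of_moreau_pinball_combo_eq ht ha hb hp hp'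
      (hcombo.trans (by rw [he]; ring)) (by rw [hcombo]; exact h (g, e))
    linear_combination hx - hx'
  have ht : τ - 1 / 2 ∈ Set.Ioo (τ - 1) τ := by constructor <;> linarith
  have ht' : τ - 1 / 4 ∈ Set.Ioo (τ - 1) τ := by constructor <;> linarith
  have hρ : ρ = ρ' := by linarith [hlinear 0 _ ht, hlinear 0 _ ht']
  subst hρ
  have hβ : β = β' := by linarith [hlinear 0 _ ht]
  have hM : M = M' := by linarith [hlinear 1 _ ht]
  rw [hβ, hM]

lemma lipschitzOnWith_pinballRisk [IsProbabilityMeasure P] (hτ : τ ∈ Set.Icc (0 : ℝ) 1)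
    (hfst : Integrable Prod.fst P) (hsnd : Integrable Prod.snd P) :
    LipschitzOnWith (Real.toNNReal (∫ z, |z.1| ∂P + 2)) (pinballRisk τ P) {p | 0 ≤ p.2.2} := by
  refine LipschitzOnWith.of_dist_le' fun p hp p' hp' => ?_
  have hint : Integrable (fun z : ℝ × ℝ => |z.1| + 2) P := hfst.abs.add (integrable_const _)
  calc dist (pinballRisk τ P p) (pinballRisk τ P p')
      = ‖∫ z, smoothedPinball τ p z - smoothedPinball τ p' z ∂P‖ := by
        rw [Real.dist_eq, Real.norm_eq_abs, pinballRisk, pinballRisk,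
          integral_sub (integrable_smoothedPinball hτ hfst hsnd hp)
            (integrable_smoothedPinball hτ hfst hsnd hp')]
    _ ≤ ∫ z, (|z.1| + 2) * dist p p' ∂P :=
        norm_integral_le_of_norm_le (hint.mul_const _)
          (Eventually.of_forall (abs_smoothedPinball_sub_le hτ hp hp'))
    _ = (∫ z, |z.1| ∂P + 2) * dist p p' := by
        rw [integral_mul_const, integral_add hfst.abs (integrable_const _)]
        simp

lemma strictConvexOn_pinballRisk [IsFiniteMeasure P] [P.IsOpenPosMeasure]
    (hτ : τ ∈ Set.Icc (0 : ℝ) 1) (hfst : Integrable Prod.fst P) (hsnd : Integrable Prod.snd P) :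
    StrictConvexOn ℝ {p : ℝ × ℝ × ℝ | 0 ≤ p.2.2} (pinballRisk τ P) := by
  have hconv := convexOn_smoothedPinball τ
  refine ⟨(hconv 0).1, fun p hp p' hp' hne a b ha hb hab => ?_⟩
  have hq : 0 ≤ (a • p + b • p').2.2 := (hconv 0).1 hp hp' ha.le hb.le hab
  have hint := (integrable_smoothedPinball hτ hfst hsnd hp).const_mul a
  have hint' := (integrable_smoothedPinball hτ hfst hsnd hp').const_mul b
  have hsum : Integrable
      (fun z => a * smoothedPinball τ p z + b * smoothedPinball τ p' z) P := hint.add hint'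
  have hintq := integrable_smoothedPinball hτ hfst hsnd hq
  obtain ⟨z, hz⟩ : ∃ z, smoothedPinball τ (a • p + b • p') z
      ≠ a * smoothedPinball τ p z + b * smoothedPinball τ p' z := by
    by_contra! h
    exact hne (eq_of_forall_smoothedPinball_combo_eq hp hp' ha hb hab h)
  have hpos : 0 < ∫ z, a * smoothedPinball τ p z + b * smoothedPinball τ p' z
      - smoothedPinball τ (a • p + b • p') z ∂P := by
    refine integral_pos_of_integrable_nonneg_nonzero (x := z) ?_ (hsum.sub hintq)
      (fun z => sub_nonneg.2 ((hconv z).2 hp hp' ha.le hb.le hab)) (sub_ne_zero.2 hz.symm)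
    exact (((continuous_smoothedPinball hτ hp).const_mul a).add
      ((continuous_smoothedPinball hτ hp').const_mul b)).sub (continuous_smoothedPinball hτ hq)
  rw [integral_sub hsum hintq, integral_add hint hint', integral_const_mul,
    integral_const_mul] at hpos
  exact sub_pos.1 hpos

lemma pinballRisk_le_pinballRisk_zero [IsFiniteMeasure P] (hτ : τ ∈ Set.Icc (0 : ℝ) 1)
    (hfst : Integrable Prod.fst P) (hsnd : Integrable Prod.snd P) (β M : ℝ) {ρ : ℝ}
    (hρ : 0 ≤ ρ) : pinballRisk τ P (β, M, ρ) ≤ pinballRisk τ P (β, M, 0) :=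
  integral_mono (integrable_smoothedPinball hτ hfst hsnd hρ)
    (integrable_smoothedPinball hτ hfst hsnd le_rfl)
    fun _ => moreau_le_moreau_zero (convexOn_pinball τ) hρ _

lemma pinballRisk_le_sub [IsProbabilityMeasure P] (hτ : τ ∈ Set.Icc (0 : ℝ) 1)
    (hfst : Integrable Prod.fst P) (hsnd : Integrable Prod.snd P) (β M : ℝ) {ρ : ℝ}
    (hρ : 0 ≤ ρ) :
    pinballRisk τ P (β, M, ρ) ≤ pinballRisk τ P (β, M, 0)
      - ρ / 2 * min τ (1 - τ) ^ 2 * (1 - P.real {z | |M * z.1 + z.2 - β| ≤ ρ}) := by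
  set S := {z : ℝ × ℝ | |M * z.1 + z.2 - β| ≤ ρ}
  set c := ρ / 2 * min τ (1 - τ) ^ 2
  have hS : MeasurableSet S := measurableSet_le (by fun_prop) (by fun_prop)
  have hint₀ : Integrable (smoothedPinball τ (β, M, 0)) P :=
    integrable_smoothedPinball hτ hfst hsnd le_rfl
  have hind : Integrable (Sᶜ.indicator fun _ => c) P := (integrable_const c).indicator hS.compl
  have hpointwise : ∀ z, smoothedPinball τ (β, M, ρ) z
      ≤ smoothedPinball τ (β, M, 0) z - Sᶜ.indicator (fun _ => c) z := by
    intro z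
    by_cases hz : z ∈ S
    · simpa [smoothedPinball, hz] using
        moreau_le_moreau_zero (convexOn_pinball τ) hρ (M * z.1 + z.2 - β)
    · rw [Set.indicator_of_mem hz]
      exact moreau_pinball_le_of_le_abs hτ hρ (not_le.1 hz).le
  calc pinballRisk τ P (β, M, ρ)
      ≤ ∫ z, smoothedPinball τ (β, M, 0) z - Sᶜ.indicator (fun _ => c) z ∂P :=
        integral_mono (integrable_smoothedPinball hτ hfst hsnd hρ) (hint₀.sub hind) hpointwise
    _ = pinballRisk τ P (β, M, 0) - c * (1 - P.real S) := by
        rw [integral_sub hint₀ hind, integral_indicator_const _ hS.compl,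
          probReal_compl_eq_one_sub hS, smul_eq_mul, mul_comm c, pinballRisk]

lemma tendsto_measureReal_abs_le {Ω : Type*} [MeasurableSpace Ω] {μ : Measure Ω}
    [IsFiniteMeasure μ] {X : Ω → ℝ} (hX : Measurable X) (hne : ∀ᵐ ω ∂μ, X ω ≠ 0) :
    Tendsto (fun δ => μ.real {ω | |X ω| ≤ δ}) (nhdsWithin 0 (Set.Ioi 0)) (nhds 0) := by
  have hlim := tendsto_measure_Icc_nhdsWithin_right' (μ.map X) 0
  have hnull : μ (X ⁻¹' {0}) = 0 := compl_mem_ae_iff.1 hne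
  rw [Measure.map_apply hX (measurableSet_singleton 0), hnull] at hlim
  refine ((ENNReal.tendsto_toReal ENNReal.zero_ne_top).comp hlim).congr fun δ => ?_
  rw [Function.comp_apply, Measure.map_apply hX measurableSet_Icc, Measure.real]
  congr 2
  ext ω
  simp [abs_le]

lemma eventually_pinballRisk_le_sub [IsProbabilityMeasure P] (hτ : τ ∈ Set.Icc (0 : ℝ) 1)
    (hfst : Integrable Prod.fst P) (hsnd : Integrable Prod.snd P) {β M κ : ℝ}
    (hne : ∀ᵐ z ∂P, M * z.1 + z.2 - β ≠ 0) (hκ : 2 * κ < min τ (1 - τ) ^ 2) :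
    ∀ᶠ ρ in nhdsWithin 0 (Set.Ioi 0),
      pinballRisk τ P (β, M, ρ) ≤ pinballRisk τ P (β, M, 0) - κ * ρ := by
  have hlim : Tendsto (fun ρ => min τ (1 - τ) ^ 2 * (1 - P.real {z | |M * z.1 + z.2 - β| ≤ ρ}))
      (nhdsWithin 0 (Set.Ioi 0)) (nhds (min τ (1 - τ) ^ 2)) := by
    simpa using ((tendsto_measureReal_abs_le (by fun_prop) hne).const_sub 1).const_mul
      (min τ (1 - τ) ^ 2)
  filter_upwards [hlim.eventually (lt_mem_nhds hκ), self_mem_nhdsWithin] with ρ hlt hρ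
  have hρ' : 0 ≤ ρ := le_of_lt hρ
  have hmul := mul_le_mul_of_nonneg_left hlt.le (half_pos hρ).le
  linarith [pinballRisk_le_sub hτ hfst hsnd β M hρ']

end PinballRisk

/-- The regularizer expectation `E[e_ν(c h + γ √d β̃; ρ)]` of the asymptotic objective, as a
function of `q = (c, ρ)`. -/
def moreauMean (γ : ℝ) (Pβ : Measure ℝ) (ν : ℝ → ℝ) (q : ℝ × ℝ) : ℝ :=
  ∫ z, moreau ν (q.1 * z.1 + γ * z.2) q.2 ∂((gaussianReal 0 1).prod Pβ)

/-- The regularizer contribution `E[e_ν(δ η h + γ √d β̃; δ)] - δ η² / 2` to the asymptotic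
objective, up to the factor `γ`; in the paper's notation `η = M_η` and `δ = M_u / ρ₂`. -/
def regTerm (γ : ℝ) (Pβ : Measure ℝ) (ν : ℝ → ℝ) (η δ : ℝ) : ℝ :=
  moreauMean γ Pβ ν (δ * η, δ) - δ * η ^ 2 / 2

lemma integral_sq_gaussianReal_zero_one : ∫ x, x ^ 2 ∂(gaussianReal 0 1) = 1 := by
  have h := variance_eq_sub (memLp_id_gaussianReal (μ := 0) (v := 1) 2)
  simpa [variance_id_gaussianReal] using h.symm

lemma integrable_sq_gaussianReal : Integrable (fun x => x ^ 2) (gaussianReal 0 1) :=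
  (memLp_id_gaussianReal 2).integrable_sq

lemma integrable_fst_gaussianReal_prod (P : Measure ℝ) [IsFiniteMeasure P] :
    Integrable Prod.fst ((gaussianReal 0 1).prod P) :=
  ((memLp_id_gaussianReal 1).integrable le_rfl).comp_fst P

lemma integrable_id_of_integrable_sq {P : Measure ℝ} [IsFiniteMeasure P]
    (h : Integrable (fun x => x ^ 2) P) : Integrable id P :=
  ((memLp_two_iff_integrable_sq aestronglyMeasurable_id).2 h).integrable one_le_two

section RegTerm

variable {γ : ℝ} {Pβ : Measure ℝ} {ν : ℝ → ℝ}

lemma convexOn_moreauMean (hν : ConvexOn ℝ Set.univ ν)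
    (hνfin : ∀ c ρ : ℝ, 0 ≤ ρ → Integrable (fun z : ℝ × ℝ => moreau ν (c * z.1 + γ * z.2) ρ)
      ((gaussianReal 0 1).prod Pβ)) :
    ConvexOn ℝ (Set.univ ×ˢ Set.Ici 0) (moreauMean γ Pβ ν) := by
  have hconv := convexOn_moreau hν
  refine ⟨hconv.1, fun q hq q' hq' a b ha hb hab => ?_⟩
  have hint := (hνfin q.1 q.2 hq.2).const_mul a
  have hint' := (hνfin q'.1 q'.2 hq'.2).const_mul b
  have hmid := hνfin (a • q + b • q').1 (a • q + b • q').2 (hconv.1 hq hq' ha hb hab).2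
  simp only [moreauMean, smul_eq_mul]
  rw [← integral_const_mul, ← integral_const_mul, ← integral_add hint hint']
  refine integral_mono hmid (hint.add hint') fun z => ?_
  have h := hconv.2 (Set.mk_mem_prod (Set.mem_univ (q.1 * z.1 + γ * z.2)) hq.2)
    (Set.mk_mem_prod (Set.mem_univ (q'.1 * z.1 + γ * z.2)) hq'.2) ha hb hab
  refine le_of_eq_of_le ?_ h
  simp only [Prod.fst_add, Prod.snd_add, Prod.smul_fst, Prod.smul_snd, smul_eq_mul]
  congr 1
  linear_combination -(γ * z.2) * hab

lemma convexOn_regTerm (hν : ConvexOn ℝ Set.univ ν)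
    (hνfin : ∀ c ρ : ℝ, 0 ≤ ρ → Integrable (fun z : ℝ × ℝ => moreau ν (c * z.1 + γ * z.2) ρ)
      ((gaussianReal 0 1).prod Pβ)) (η : ℝ) :
    ConvexOn ℝ (Set.Ici 0) (regTerm γ Pβ ν η) := by
  have hline := (convexOn_moreauMean hν hνfin).comp_linearMap
    ((LinearMap.mulRight ℝ η).prod LinearMap.id)
  refine (hline.subset (fun δ hδ => ⟨Set.mem_univ _, hδ⟩) (convex_Ici 0)).sub ?_
  refine ⟨convex_Ici 0, fun δ _ δ' _ a b _ _ _ => le_of_eq ?_⟩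
  simp only [smul_eq_mul]
  ring

lemma continuousOn_regTerm
    (hνcont : ContinuousOn (moreauMean γ Pβ ν) (Set.univ ×ˢ Set.Ici 0)) (η : ℝ) :
    ContinuousOn (regTerm γ Pβ ν η) (Set.Ici 0) :=
  (hνcont.comp (f := fun δ : ℝ => (δ * η, δ)) (by fun_prop)
    fun _ hδ => ⟨Set.mem_univ _, hδ⟩).sub (by fun_prop)

lemma regTerm_le_moreauMean_zero [IsProbabilityMeasure Pβ] (hν : ConvexOn ℝ Set.univ ν)
    (hνfin : ∀ c ρ : ℝ, 0 ≤ ρ → Integrable (fun z : ℝ × ℝ => moreau ν (c * z.1 + γ * z.2) ρ)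
      ((gaussianReal 0 1).prod Pβ)) (η : ℝ) {δ : ℝ} (hδ : 0 ≤ δ) :
    regTerm γ Pβ ν η δ ≤ moreauMean γ Pβ ν (0, 0) := by
  have hsq := (integrable_sq_gaussianReal.comp_fst Pβ).const_mul (δ * η ^ 2 / 2)
  have hint₀ := hνfin 0 0 le_rfl
  suffices hle : moreauMean γ Pβ ν (δ * η, δ) ≤ moreauMean γ Pβ ν (0, 0) + δ * η ^ 2 / 2 from
    sub_le_iff_le_add.2 hle
  calc moreauMean γ Pβ ν (δ * η, δ)
      ≤ ∫ z, moreau ν (0 * z.1 + γ * z.2) 0 + δ * η ^ 2 / 2 * z.1 ^ 2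
          ∂((gaussianReal 0 1).prod Pβ) := by
        refine integral_mono (hνfin _ _ hδ) (hint₀.add hsq) fun z => ?_
        refine le_of_eq_of_le ?_ ((moreau_add_mul_le hν hδ (γ * z.2) (η * z.1)).trans_eq ?_)
        · exact congrArg (moreau ν · δ) (by ring)
        · rw [moreau_zero, zero_mul, zero_add]
          ring
    _ = moreauMean γ Pβ ν (0, 0) + δ * η ^ 2 / 2 := by
        rw [integral_add hint₀ hsq, integral_const_mul, integral_fun_fst (fun x : ℝ => x ^ 2),
          integral_sq_gaussianReal_zero_one, moreauMean]
        simp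

lemma mul_regTerm_le [IsProbabilityMeasure Pβ] (hγ : 0 ≤ γ) (hν : ConvexOn ℝ Set.univ ν)
    (hνfin : ∀ c ρ : ℝ, 0 ≤ ρ → Integrable (fun z : ℝ × ℝ => moreau ν (c * z.1 + γ * z.2) ρ)
      ((gaussianReal 0 1).prod Pβ)) (η : ℝ) {δ : ℝ} (hδ : 0 ≤ δ) :
    γ * regTerm γ Pβ ν η δ ≤ γ * moreauMean γ Pβ ν (0, 0) :=
  mul_le_mul_of_nonneg_left (regTerm_le_moreauMean_zero hν hνfin η hδ) hγ

lemma regTerm_eq_sub_integral_moreauConj [IsProbabilityMeasure Pβ]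
    (hPβ2 : Integrable (fun x => x ^ 2) Pβ) (hν : ConvexOn ℝ Set.univ ν)
    (hνfin : ∀ c ρ : ℝ, 0 ≤ ρ → Integrable (fun z : ℝ × ℝ => moreau ν (c * z.1 + γ * z.2) ρ)
      ((gaussianReal 0 1).prod Pβ)) (η : ℝ) {ρ : ℝ} (hρ : 0 < ρ) :
    regTerm γ Pβ ν η (1 / ρ) = ρ * γ ^ 2 / 2 * ∫ x, x ^ 2 ∂Pβ
      - ∫ z, moreauConj ν (η * z.1 + ρ * γ * z.2) ρ ∂((gaussianReal 0 1).prod Pβ) := by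
  have hmoreau := hνfin (1 / ρ * η) (1 / ρ) (one_div_pos.2 hρ).le
  have hg := (integrable_sq_gaussianReal.comp_fst Pβ).const_mul (1 / ρ * η ^ 2 / 2)
  have hβ := (hPβ2.comp_snd (gaussianReal 0 1)).const_mul (ρ * γ ^ 2 / 2)
  have hcross := ((integrable_id_of_integrable_sq integrable_sq_gaussianReal).mul_prod
    (integrable_id_of_integrable_sq hPβ2)).const_mul (η * γ)
  have hquad : Integrable (fun z : ℝ × ℝ => 1 / ρ * η ^ 2 / 2 * z.1 ^ 2
      + ρ * γ ^ 2 / 2 * z.2 ^ 2) ((gaussianReal 0 1).prod Pβ) := hg.add hβ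
  have hsum : Integrable (fun z : ℝ × ℝ => 1 / ρ * η ^ 2 / 2 * z.1 ^ 2
      + ρ * γ ^ 2 / 2 * z.2 ^ 2 + η * γ * (id z.1 * id z.2)) ((gaussianReal 0 1).prod Pβ) :=
    hquad.add hcross
  have hpointwise : ∀ z : ℝ × ℝ, moreauConj ν (η * z.1 + ρ * γ * z.2) ρ
      = 1 / ρ * η ^ 2 / 2 * z.1 ^ 2 + ρ * γ ^ 2 / 2 * z.2 ^ 2 + η * γ * (id z.1 * id z.2)
        - moreau ν (1 / ρ * η * z.1 + γ * z.2) (1 / ρ) := by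
    intro z
    rw [moreauConj_eq_sub_moreau hν hρ]
    congr 1
    · simp only [id]
      field_simp
      ring
    · congr 1
      field_simp
  simp only [hpointwise]
  rw [integral_sub hsum hmoreau, integral_add hquad hcross, integral_add hg hβ,
    integral_const_mul, integral_const_mul, integral_const_mul, integral_prod_mul id id,
    integral_fun_fst (fun x : ℝ => x ^ 2), integral_fun_snd (fun x : ℝ => x ^ 2),
    integral_sq_gaussianReal_zero_one]
  simp only [id, integral_id_gaussianReal, probReal_univ, one_smul, regTerm, moreauMean]
  ring

lemma add_half_mul_sq_sub_sq_le {G D : ℝ → ℝ} {m a b : ℝ} (ha : 0 ≤ a) (hab : a ≤ b)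
    (hG : ∀ c, HasDerivAt G (c * D c) c) (hD : ∀ c ∈ Set.Icc a b, m ≤ D c) :
    G a + m / 2 * (b ^ 2 - a ^ 2) ≤ G b := by
  have hderiv : ∀ c, HasDerivAt (fun c => G c - m / 2 * c ^ 2) (c * (D c - m)) c := fun c =>
    ((hG c).sub ((hasDerivAt_pow 2 c).const_mul (m / 2))).congr_deriv (by
      simp only [Nat.cast_ofNat, Nat.add_one_sub_one, pow_one]
      ring)
  have hmono : MonotoneOn (fun c => G c - m / 2 * c ^ 2) (Set.Icc a b) := by
    refine monotoneOn_of_hasDerivWithinAt_nonneg (convex_Icc a b)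
      (fun c _ => (hderiv c).continuousAt.continuousWithinAt)
      (fun c _ => (hderiv c).hasDerivWithinAt) fun c hc => ?_
    have hc' := interior_subset hc
    exact mul_nonneg (ha.trans hc'.1) (sub_nonneg.2 (hD c hc'))
  have := hmono (Set.left_mem_Icc.2 hab) (Set.right_mem_Icc.2 hab) hab
  linarith

lemma exists_regTerm_le_sub_sq [IsProbabilityMeasure Pβ]
    (hPβ2 : Integrable (fun x => x ^ 2) Pβ) (hν : ConvexOn ℝ Set.univ ν)
    (hνfin : ∀ c ρ : ℝ, 0 ≤ ρ → Integrable (fun z : ℝ × ℝ => moreau ν (c * z.1 + γ * z.2) ρ)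
      ((gaussianReal 0 1).prod Pβ))
    (hνconj : ConjDerivAssumption γ Pβ ν) {c C δ₀ : ℝ} (hc : 0 < c) (hδ₀ : 0 < δ₀) :
    ∃ m > 0, ∀ η ∈ Set.Icc c C, ∀ δ ≥ δ₀,
      regTerm γ Pβ ν η δ ≤ regTerm γ Pβ ν c δ - m * (η ^ 2 - c ^ 2) := by
  obtain ⟨D₁, D₂, hderiv, hlower⟩ := hνconj
  obtain ⟨m, hm, hmD⟩ := hlower (Set.Icc c C) isCompact_Icc (fun x hx => hc.trans_le hx.1)
    (1 / δ₀) (one_div_pos.2 hδ₀)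
  refine ⟨m / 2, half_pos hm, fun η hη δ hδ => ?_⟩
  have hρ : 0 < 1 / δ := one_div_pos.2 (hδ₀.trans_le hδ)
  have hgrowth := add_half_mul_sq_sub_sq_le hc.le hη.1
    (fun t => ((hderiv (1 / δ) hρ).2.2 t).2 ▸ ((hderiv (1 / δ) hρ).2.2 t).1)
    (fun t ht => hmD t ⟨ht.1, ht.2.trans hη.2⟩ (1 / δ) ⟨hρ, one_div_le_one_div_of_le hδ₀ hδ⟩)
  have hη_eq := regTerm_eq_sub_integral_moreauConj hPβ2 hν hνfin η hρ
  have hc_eq := regTerm_eq_sub_integral_moreauConj hPβ2 hν hνfin c hρ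
  rw [one_div_one_div] at hη_eq hc_eq
  linarith

end RegTerm

lemma existsUnique_isMinOn_of_strictConvexOn {E : Type*} [TopologicalSpace E] [AddCommGroup E]
    [Module ℝ E] {s : Set E} {F : E → ℝ} (hs : IsCompact s) (hne : s.Nonempty)
    (hF : StrictConvexOn ℝ s F) (hlsc : LowerSemicontinuousOn F s) :
    ∃! p, p ∈ s ∧ IsMinOn F s p := by
  obtain ⟨p, hp, hmin⟩ := hlsc.exists_isMinOn hne hs
  exact ⟨p, ⟨hp, hmin⟩, fun p' hp' => hF.eq_of_isMinOn hp'.2 hmin hp'.1 hp⟩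

-- A supremum of strictly convex functions need not be strictly convex; here the convexity gap
-- stays bounded away from zero because it is continuous in the compact parameter `K`.
lemma strictConvexOn_sSup_image_add {E X Y : Type*} [AddCommGroup E] [Module ℝ E]
    [TopologicalSpace X] {s : Set E} {K : Set X} {T : Set Y} {f : X → E → ℝ}
    {g : X × Y → E → ℝ} (hK : IsCompact K) (hKne : K.Nonempty) (hT : T.Nonempty)
    (hfc : ∀ p ∈ s, ContinuousOn (f · p) K) (hf : ∀ x ∈ K, StrictConvexOn ℝ s (f x))
    (hg : ∀ q ∈ K ×ˢ T, ConvexOn ℝ s (g q))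
    (hbdd : ∀ p ∈ s, BddAbove ((fun q => f q.1 p + g q p) '' (K ×ˢ T))) :
    StrictConvexOn ℝ s fun p => sSup ((fun q => f q.1 p + g q p) '' (K ×ˢ T)) := by
  have hs : Convex ℝ s := (hf _ hKne.some_mem).1
  refine ⟨hs, fun p hp p' hp' hne a b ha hb hab => ?_⟩
  set F : E → ℝ := fun p => sSup ((fun q => f q.1 p + g q p) '' (K ×ˢ T))
  have hle : ∀ p ∈ s, ∀ q ∈ K ×ˢ T, f q.1 p + g q p ≤ F p := fun p hp q hq =>
    le_csSup (hbdd p hp) (Set.mem_image_of_mem _ hq)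
  set gap : X → ℝ := fun x => a * f x p + b * f x p' - f x (a • p + b • p')
  have hgap : ContinuousOn gap K :=
    (((hfc p hp).const_mul a).add ((hfc p' hp').const_mul b)).sub
      (hfc _ (hs hp hp' ha.le hb.le hab))
  obtain ⟨x₀, hx₀, hmin⟩ := hK.exists_isMinOn hKne hgap
  have hpos : 0 < gap x₀ := sub_pos.2 ((hf x₀ hx₀).2 hp hp' hne ha hb hab)
  have hsup : F (a • p + b • p') ≤ a * F p + b * F p' - gap x₀ := by
    refine csSup_le ((hKne.prod hT).image _) ?_
    rintro _ ⟨q, hq, rfl⟩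
    have hgapq : gap x₀ ≤ gap q.1 := hmin hq.1
    have hgq : g q (a • p + b • p') ≤ a * g q p + b * g q p' :=
      (hg q hq).2 hp hp' ha.le hb.le hab
    have hFp := mul_le_mul_of_nonneg_left (hle p hp q hq) ha.le
    have hFp' := mul_le_mul_of_nonneg_left (hle p' hp' q hq) hb.le
    simp only [gap] at hgapq
    linarith
  simpa only [smul_eq_mul] using hsup.trans_lt (sub_lt_self _ hpos)

lemma lowerSemicontinuousOn_sSup_image {E Q : Type*} [TopologicalSpace E] {s : Set E} {T : Set Q}
    {f : Q → E → ℝ} (hbdd : ∀ p ∈ s, BddAbove ((f · p) '' T))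
    (hf : ∀ q ∈ T, LowerSemicontinuousOn (f q) s) :
    LowerSemicontinuousOn (fun p => sSup ((f · p) '' T)) s := by
  simp only [sSup_image']
  refine lowerSemicontinuousOn_ciSup (fun p hp => ?_) fun q => hf q q.2
  simpa only [Set.image_eq_range] using hbdd p hp

/-- The form shared by the asymptotic objective as a function of `q = (M_η, ρ₂)` and
`p = (β₀, M_u, ρ₁)`: a loss `L` evaluated at `ρ₁ / M_η`, a regularizer `B` evaluated at
`M_u / ρ₂`, and a bilinear coupling. -/
def saddleObj (L : ℝ × ℝ × ℝ → ℝ) (B : ℝ → ℝ → ℝ) (q : ℝ × ℝ) (p : ℝ × ℝ × ℝ) : ℝ :=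
  L (p.1, p.2.1, p.2.2 / q.1) + (B q.1 (p.2.1 / q.2) + q.1 * p.2.2 / 2 - p.2.1 * q.2 / 2)

/-- The inner maximum of `saddleObj` over `M_η ∈ [c, C]` and `ρ₂ ∈ (0, R]`. -/
def saddleMax (L : ℝ × ℝ × ℝ → ℝ) (B : ℝ → ℝ → ℝ) (c C R : ℝ) (p : ℝ × ℝ × ℝ) : ℝ :=
  sSup ((fun q => saddleObj L B q p) '' (Set.Icc c C ×ˢ Set.Ioc 0 R))

/-- The triples `(β₀, M_u, ρ₁)` with `0 ≤ M_u` and `0 ≤ ρ₁`. -/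
def saddleDomain : Set (ℝ × ℝ × ℝ) := Set.univ ×ˢ Set.Ici 0 ×ˢ Set.Ici 0

section Saddle

variable {L : ℝ × ℝ × ℝ → ℝ} {B : ℝ → ℝ → ℝ} {b c C R : ℝ}

lemma convex_saddleDomain : Convex ℝ saddleDomain :=
  convex_univ.prod ((convex_Ici 0).prod (convex_Ici 0))

lemma bddAbove_saddleObj_image
    (hL : ∀ β M : ℝ, ∀ ρ ≥ 0, L (β, M, ρ) ≤ L (β, M, 0)) (hc : 0 < c)
    (hB : ∀ η, ∀ δ ≥ 0, B η δ ≤ b) {p : ℝ × ℝ × ℝ} (hp : p ∈ saddleDomain) :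
    BddAbove ((fun q => saddleObj L B q p) '' (Set.Icc c C ×ˢ Set.Ioc 0 R)) := by
  obtain ⟨-, hM, hρ⟩ := hp
  refine ⟨L (p.1, p.2.1, 0) + (b + C * p.2.2 / 2), ?_⟩
  rintro _ ⟨q, ⟨hη, hr⟩, rfl⟩
  have hLq := hL p.1 p.2.1 (p.2.2 / q.1) (div_nonneg hρ (hc.le.trans hη.1))
  have hBq := hB q.1 (p.2.1 / q.2) (div_nonneg hM hr.1.le)
  have hηρ := mul_le_mul_of_nonneg_right hη.2 hρ
  have hMr := mul_nonneg hM hr.1.le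
  simp only [saddleObj]
  linarith

lemma continuousOn_saddleObj (hL : ContinuousOn L {p | 0 ≤ p.2.2})
    (hB : ∀ η, ContinuousOn (B η) (Set.Ici 0)) {q : ℝ × ℝ} (hη : 0 ≤ q.1) (hr : 0 ≤ q.2) :
    ContinuousOn (saddleObj L B q) saddleDomain := by
  have hLq : ContinuousOn (fun p : ℝ × ℝ × ℝ => L (p.1, p.2.1, p.2.2 / q.1)) saddleDomain :=
    hL.comp (f := fun p : ℝ × ℝ × ℝ => (p.1, p.2.1, p.2.2 / q.1)) (by fun_prop)
      fun p hp => div_nonneg hp.2.2 hη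
  have hBq : ContinuousOn (fun p : ℝ × ℝ × ℝ => B q.1 (p.2.1 / q.2)) saddleDomain :=
    (hB q.1).comp (f := fun p : ℝ × ℝ × ℝ => p.2.1 / q.2) (by fun_prop)
      fun p hp => div_nonneg hp.2.1 hr
  exact hLq.add ((hBq.add (by fun_prop)).sub (by fun_prop))

lemma strictConvexOn_saddleMax (hLle : ∀ β M : ℝ, ∀ ρ ≥ 0, L (β, M, ρ) ≤ L (β, M, 0))
    (hLcont : ContinuousOn L {p | 0 ≤ p.2.2}) (hL : StrictConvexOn ℝ {p | 0 ≤ p.2.2} L)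
    (hBle : ∀ η, ∀ δ ≥ 0, B η δ ≤ b) (hB : ∀ η, ConvexOn ℝ (Set.Ici 0) (B η))
    (hc : 0 < c) (hcC : c ≤ C) (hR : 0 < R) :
    StrictConvexOn ℝ saddleDomain (saddleMax L B c C R) := by
  refine strictConvexOn_sSup_image_add (f := fun η p => L (p.1, p.2.1, p.2.2 / η))
    (g := fun q p => B q.1 (p.2.1 / q.2) + q.1 * p.2.2 / 2 - p.2.1 * q.2 / 2)
    isCompact_Icc (Set.nonempty_Icc.2 hcC) (Set.nonempty_Ioc.2 hR) (fun p hp => ?_)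
    (fun η hη => ⟨convex_saddleDomain, fun p hp p' hp' hne a b ha hb hab => ?_⟩)
    (fun q hq => ⟨convex_saddleDomain, fun p hp p' hp' a b ha hb hab => ?_⟩)
    fun p hp => bddAbove_saddleObj_image hLle hc hBle hp
  · refine hLcont.comp (f := fun η : ℝ => (p.1, p.2.1, p.2.2 / η)) ?_
      fun η hη => div_nonneg hp.2.2 (hc.le.trans hη.1)
    exact continuousOn_const.prodMk (continuousOn_const.prodMk
      (continuousOn_const.div continuousOn_id fun η hη => (hc.trans_le hη.1).ne'))
  · have hη₀ : 0 < η := hc.trans_le hη.1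
    have h := hL.2 (x := (p.1, p.2.1, p.2.2 / η)) (div_nonneg hp.2.2 hη₀.le)
      (y := (p'.1, p'.2.1, p'.2.2 / η)) (div_nonneg hp'.2.2 hη₀.le) (fun heq => hne ?_) ha hb hab
    · refine lt_of_eq_of_lt (congrArg L ?_) h
      simp only [Prod.ext_iff, Prod.fst_add, Prod.snd_add, Prod.smul_fst, Prod.smul_snd,
        smul_eq_mul, true_and]
      ring
    · simpa only [Prod.mk.injEq, div_left_inj' hη₀.ne', ← Prod.ext_iff] using heq
  · have h := (hB q.1).2 (x := p.2.1 / q.2) (div_nonneg hp.2.1 hq.2.1.le)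
      (y := p'.2.1 / q.2) (div_nonneg hp'.2.1 hq.2.1.le) ha hb hab
    simp only [Prod.fst_add, Prod.snd_add, Prod.smul_fst, Prod.smul_snd, smul_eq_mul, add_div,
      mul_div_assoc] at h ⊢
    linarith

lemma lowerSemicontinuousOn_saddleMax
    (hLle : ∀ β M : ℝ, ∀ ρ ≥ 0, L (β, M, ρ) ≤ L (β, M, 0))
    (hLcont : ContinuousOn L {p | 0 ≤ p.2.2}) (hBle : ∀ η, ∀ δ ≥ 0, B η δ ≤ b)
    (hBcont : ∀ η, ContinuousOn (B η) (Set.Ici 0)) (hc : 0 < c) :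
    LowerSemicontinuousOn (saddleMax L B c C R) saddleDomain :=
  lowerSemicontinuousOn_sSup_image (fun _ hp => bddAbove_saddleObj_image hLle hc hBle hp)
    fun _ hq => (continuousOn_saddleObj hLcont hBcont (hc.le.trans hq.1.1)
      hq.2.1.le).lowerSemicontinuousOn

lemma eventually_exists_add_sub_sq_le {ℓ : ℝ → ℝ} {κ m : ℝ} (hc : 0 < c) (hcC : c ≤ C)
    (hκ : c ^ 2 < 2 * κ) (hm : 0 < m) (hℓ : ∀ ρ ≥ 0, ℓ ρ ≤ ℓ 0)
    (hdrop : ∀ᶠ ρ in nhdsWithin 0 (Set.Ioi 0), ℓ ρ ≤ ℓ 0 - κ * ρ) :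
    ∀ᶠ t in nhdsWithin 0 (Set.Ioi 0), ∃ ε > 0, ∀ η ∈ Set.Icc c C,
      ℓ (t / η) + η * t / 2 - m * (η ^ 2 - c ^ 2) ≤ ℓ 0 - ε := by
  have hC : 0 < C := hc.trans_le hcC
  -- For `η² ≤ u` the linear drop of `ℓ` beats `η t / 2`; for `η² > u` the quadratic penalty does.
  obtain ⟨u, hcu, huκ⟩ := exists_between hκ
  have hD : 0 < m * (u - c ^ 2) := mul_pos hm (sub_pos.2 hcu)
  obtain ⟨δ, hδ, hdropδ⟩ := mem_nhdsGT_iff_exists_Ioo_subset.1 hdrop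
  have hsmall : Set.Ioo 0 (min (δ * c) (m * (u - c ^ 2) / C)) ∈ nhdsWithin (0 : ℝ) (Set.Ioi 0) :=
    Ioo_mem_nhdsGT (lt_min (mul_pos hδ hc) (div_pos hD hC))
  filter_upwards [hsmall] with t ⟨ht, hlt⟩
  have htδ : t < δ * c := hlt.trans_le (min_le_left _ _)
  have htD : t * C < m * (u - c ^ 2) := (lt_div_iff₀ hC).1 (hlt.trans_le (min_le_right _ _))
  refine ⟨min (t / C * (κ - u / 2)) (m * (u - c ^ 2) / 2),
    lt_min (mul_pos (div_pos ht hC) (by linarith)) (half_pos hD), fun η hη => ?_⟩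
  have hη₀ : 0 < η := hc.trans_le hη.1
  rcases le_or_gt (η ^ 2) u with hηu | hηu
  · have hρδ : t / η < δ := (div_lt_iff₀ hη₀).2 (htδ.trans_le (by gcongr; exacts [hδ.le, hη.1]))
    have hdropη : ℓ (t / η) ≤ ℓ 0 - κ * (t / η) := hdropδ ⟨div_pos ht hη₀, hρδ⟩
    have hcoupling : η * t / 2 ≤ t / η * (u / 2) := by
      calc η * t / 2 = t / η * (η ^ 2 / 2) := by field_simp
        _ ≤ t / η * (u / 2) := by gcongr
    have hgain : t / C * (κ - u / 2) ≤ t / η * (κ - u / 2) := by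
      have : 0 ≤ κ - u / 2 := by linarith
      gcongr
      exact hη.2
    have hpenalty : 0 ≤ m * (η ^ 2 - c ^ 2) :=
      mul_nonneg hm.le (sub_nonneg.2 (pow_le_pow_left₀ hc.le hη.1 2))
    linarith [min_le_left (t / C * (κ - u / 2)) (m * (u - c ^ 2) / 2)]
  · have hpenalty : m * (u - c ^ 2) ≤ m * (η ^ 2 - c ^ 2) := by gcongr
    have hcoupling : η * t ≤ t * C := by rw [mul_comm]; gcongr; exact hη.2
    linarith [hℓ (t / η) (div_pos ht hη₀).le,
      min_le_right (t / C * (κ - u / 2)) (m * (u - c ^ 2) / 2)]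

lemma eventually_saddleMax_lt {β M κ m : ℝ}
    (hLle : ∀ β M : ℝ, ∀ ρ ≥ 0, L (β, M, ρ) ≤ L (β, M, 0)) (hBle : ∀ η, ∀ δ ≥ 0, B η δ ≤ b)
    (hM : 0 ≤ M) (hc : 0 < c) (hcC : c ≤ C) (hR : 0 < R) (hκ : c ^ 2 < 2 * κ) (hm : 0 < m)
    (hdrop : ∀ᶠ ρ in nhdsWithin 0 (Set.Ioi 0), L (β, M, ρ) ≤ L (β, M, 0) - κ * ρ)
    (hpenalty : ∀ η ∈ Set.Icc c C, ∀ r ∈ Set.Ioc 0 R,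
      B η (M / r) ≤ B c (M / r) - m * (η ^ 2 - c ^ 2)) :
    ∀ᶠ t in nhdsWithin 0 (Set.Ioi 0),
      saddleMax L B c C R (β, M, t) < saddleMax L B c C R (β, M, 0) := by
  filter_upwards [eventually_exists_add_sub_sq_le hc hcC hκ hm (hLle β M) hdrop]
    with t ⟨ε, hε, hgain⟩
  refine lt_of_le_of_lt (csSup_le (((Set.nonempty_Icc.2 hcC).prod (Set.nonempty_Ioc.2 hR)).image _)
    ?_) (sub_lt_self _ hε)
  rintro _ ⟨⟨η, r⟩, ⟨hη, hr⟩, rfl⟩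
  have hzero : saddleObj L B (c, r) (β, M, 0) ≤ saddleMax L B c C R (β, M, 0) :=
    le_csSup (bddAbove_saddleObj_image hLle hc hBle ⟨Set.mem_univ _, hM, le_refl (0 : ℝ)⟩)
      (Set.mem_image_of_mem _ ⟨Set.left_mem_Icc.2 hcC, hr⟩)
  simp only [saddleObj, zero_div, mul_zero] at hzero ⊢
  linarith [hgain η hη, hpenalty η hη r hr]

end Saddle

lemma NoiseAssumption.integrable_id {Pε : Measure ℝ} [IsFiniteMeasure Pε]
    (h : NoiseAssumption Pε) : Integrable id Pε :=
  integrable_id_of_integrable_sq h.second_moment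

lemma NoiseAssumption.isOpenPosMeasure {Pε : Measure ℝ} (h : NoiseAssumption Pε) :
    Pε.IsOpenPosMeasure := by
  obtain ⟨f, hf, hpos, -, rfl⟩ := h.density
  exact (withDensity_absolutelyContinuous' (by fun_prop)
    (Eventually.of_forall fun x => (ENNReal.ofReal_pos.2 (hpos x)).ne')).isOpenPosMeasure

lemma isOpenPosMeasure_gaussianReal (m : ℝ) {v : NNReal} (hv : v ≠ 0) :
    (gaussianReal m v).IsOpenPosMeasure :=
  (gaussianReal_absolutelyContinuous' m hv).isOpenPosMeasure

lemma ae_prod_mul_add_sub_ne_zero {μ P : Measure ℝ} [SFinite μ] [SFinite P]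
    [NullSingletonClass μ] {M : ℝ} (hM : M ≠ 0) (β : ℝ) :
    ∀ᵐ z ∂μ.prod P, M * z.1 + z.2 - β ≠ 0 := by
  have hmeas : MeasurableSet {z : ℝ × ℝ | M * z.1 + z.2 - β ≠ 0} :=
    (measurableSet_eq_fun (by fun_prop) measurable_const).compl
  rw [Measure.ae_prod_iff_ae_ae hmeas, Measure.ae_ae_comm hmeas]
  refine Eventually.of_forall fun ε => ?_
  filter_upwards [Measure.ae_ne μ ((β - ε) / M)] with g hg heq
  exact hg (by field_simp; linarith)

lemma asymFmax_eq_saddleMax (τ γ : ℝ) (Pε Pβ : Measure ℝ) (ν : ℝ → ℝ) (cη Cη C₂ : ℝ) :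
    asymFmax τ γ Pε Pβ ν cη Cη C₂ = saddleMax (pinballRisk τ ((gaussianReal 0 1).prod Pε))
      (fun η δ => γ * regTerm γ Pβ ν η δ) cη Cη C₂ := by
  funext p
  refine congrArg sSup (Set.image_congr' fun q => ?_)
  simp only [asymObj, saddleObj, pinballRisk, smoothedPinball, regTerm, moreauMean]
  rw [show q.1 * p.2.1 / q.2 = p.2.1 / q.2 * q.1 by ring]
  ring

lemma convex_asymBox (Cβ0 Cu C₁ : ℝ) : Convex ℝ (asymBox Cβ0 Cu C₁) :=
  (convex_Icc _ _).prod ((convex_Icc _ _).prod (convex_Icc _ _))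

lemma isCompact_asymBox (Cβ0 Cu C₁ : ℝ) : IsCompact (asymBox Cβ0 Cu C₁) :=
  isCompact_Icc.prod (isCompact_Icc.prod isCompact_Icc)

lemma asymBox_subset_saddleDomain (Cβ0 Cu C₁ : ℝ) : asymBox Cβ0 Cu C₁ ⊆ saddleDomain :=
  fun _ hp => ⟨Set.mem_univ _, hp.2.1.1, hp.2.2.1⟩

lemma sqrt_half_min_sq_le {x y : ℝ} (hx : 0 ≤ x) (hy : 0 ≤ y) :
    √((1 / 2) * min (x ^ 2) (y ^ 2)) ≤ min x y := by
  have hmin : min (x ^ 2) (y ^ 2) = min x y ^ 2 :=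
    ((pow_left_monotoneOn (n := 2)).map_min hx hy).symm
  rw [hmin]
  exact Real.sqrt_le_iff.2 ⟨le_min hx hy, by linarith [sq_nonneg (min x y)]⟩

section AsymptoticProgram

variable {τ γ : ℝ} {Pε Pβ : Measure ℝ} [IsProbabilityMeasure Pε] [IsProbabilityMeasure Pβ]
  {ν : ℝ → ℝ} {cη Cη C₂ : ℝ}

lemma strictConvexOn_asymFmax [Pε.IsOpenPosMeasure] (hτ : τ ∈ Set.Icc (0 : ℝ) 1) (hγ : 0 ≤ γ)
    (hPε : Integrable id Pε) (hν : ConvexOn ℝ Set.univ ν)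
    (hνfin : ∀ c ρ : ℝ, 0 ≤ ρ → Integrable (fun z : ℝ × ℝ => moreau ν (c * z.1 + γ * z.2) ρ)
      ((gaussianReal 0 1).prod Pβ)) (hcη : 0 < cη) (hcηCη : cη ≤ Cη) (hC₂ : 0 < C₂) :
    StrictConvexOn ℝ saddleDomain (asymFmax τ γ Pε Pβ ν cη Cη C₂) := by
  have := isOpenPosMeasure_gaussianReal 0 one_ne_zero
  have hfst := integrable_fst_gaussianReal_prod Pε
  have hsnd := hPε.comp_snd (gaussianReal 0 1)
  rw [asymFmax_eq_saddleMax]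
  exact strictConvexOn_saddleMax (fun β M _ => pinballRisk_le_pinballRisk_zero hτ hfst hsnd β M)
    (lipschitzOnWith_pinballRisk hτ hfst hsnd).continuousOn
    (strictConvexOn_pinballRisk hτ hfst hsnd) (mul_regTerm_le hγ hν hνfin)
    (fun η => (convexOn_regTerm hν hνfin η).smul hγ) hcη hcηCη hC₂

lemma lowerSemicontinuousOn_asymFmax (hτ : τ ∈ Set.Icc (0 : ℝ) 1) (hγ : 0 ≤ γ)
    (hPε : Integrable id Pε) (hν : ConvexOn ℝ Set.univ ν)
    (hνfin : ∀ c ρ : ℝ, 0 ≤ ρ → Integrable (fun z : ℝ × ℝ => moreau ν (c * z.1 + γ * z.2) ρ)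
      ((gaussianReal 0 1).prod Pβ))
    (hνcont : ContinuousOn (moreauMean γ Pβ ν) (Set.univ ×ˢ Set.Ici 0)) (hcη : 0 < cη) :
    LowerSemicontinuousOn (asymFmax τ γ Pε Pβ ν cη Cη C₂) saddleDomain := by
  have hfst := integrable_fst_gaussianReal_prod Pε
  have hsnd := hPε.comp_snd (gaussianReal 0 1)
  rw [asymFmax_eq_saddleMax]
  exact lowerSemicontinuousOn_saddleMax
    (fun β M _ => pinballRisk_le_pinballRisk_zero hτ hfst hsnd β M)
    (lipschitzOnWith_pinballRisk hτ hfst hsnd).continuousOn (mul_regTerm_le hγ hν hνfin)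
    (fun η => (continuousOn_regTerm hνcont η).const_mul γ) hcη

lemma eventually_asymFmax_lt (hτ : τ ∈ Set.Icc (0 : ℝ) 1) (hγ : 0 < γ) (hPε : Integrable id Pε)
    (hPβ2 : Integrable (fun x => x ^ 2) Pβ) (hν : ConvexOn ℝ Set.univ ν)
    (hνfin : ∀ c ρ : ℝ, 0 ≤ ρ → Integrable (fun z : ℝ × ℝ => moreau ν (c * z.1 + γ * z.2) ρ)
      ((gaussianReal 0 1).prod Pβ)) (hνconj : ConjDerivAssumption γ Pβ ν) (hcη : 0 < cη)
    (hcηCη : cη ≤ Cη) (hC₂ : 0 < C₂) (hcητ : cη < min τ (1 - τ)) (β : ℝ) {M : ℝ} (hM : 0 < M) :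
    ∀ᶠ t in nhdsWithin 0 (Set.Ioi 0),
      asymFmax τ γ Pε Pβ ν cη Cη C₂ (β, M, t) < asymFmax τ γ Pε Pβ ν cη Cη C₂ (β, M, 0) := by
  have := nullSingletonClass_gaussianReal (μ := 0) one_ne_zero
  have hfst := integrable_fst_gaussianReal_prod Pε
  have hsnd := hPε.comp_snd (gaussianReal 0 1)
  obtain ⟨s, hcs, hsτ⟩ := exists_between (pow_lt_pow_left₀ hcητ hcη.le two_ne_zero)
  obtain ⟨m, hm, hdecr⟩ :=
    exists_regTerm_le_sub_sq (C := Cη) hPβ2 hν hνfin hνconj hcη (div_pos hM hC₂)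
  rw [asymFmax_eq_saddleMax]
  refine eventually_saddleMax_lt (κ := s / 2) (m := γ * m)
    (fun β M _ => pinballRisk_le_pinballRisk_zero hτ hfst hsnd β M)
    (mul_regTerm_le hγ.le hν hνfin) hM.le hcη hcηCη hC₂ (by linarith) (mul_pos hγ hm)
    (eventually_pinballRisk_le_sub hτ hfst hsnd (ae_prod_mul_add_sub_ne_zero hM.ne' β)
      (by linarith)) fun η hη r hr => ?_
  have hδ : M / C₂ ≤ M / r := div_le_div_of_nonneg_left hM.le hr.1 hr.2
  linarith [mul_le_mul_of_nonneg_left (hdecr η hη (M / r) hδ) hγ.le]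

end AsymptoticProgram

theorem asym_program_unique_solution_general
    (τ γ : ℝ) (hγ : 0 < γ) (Pε Pβ : Measure ℝ) [IsProbabilityMeasure Pε] [IsProbabilityMeasure Pβ]
    [Pε.IsOpenPosMeasure] (hPε : Integrable id Pε) (hPβ2 : Integrable (fun x => x ^ 2) Pβ)
    (ν : ℝ → ℝ) (hν : ConvexOn ℝ Set.univ ν)
    (hνfin : ∀ c ρ : ℝ, 0 ≤ ρ → Integrable (fun z : ℝ × ℝ => moreau ν (c * z.1 + γ * z.2) ρ)
      ((gaussianReal 0 1).prod Pβ))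
    (hνcont : ContinuousOn (moreauMean γ Pβ ν) (Set.univ ×ˢ Set.Ici 0))
    (hνconj : ConjDerivAssumption γ Pβ ν) (Cβ0 Cu C₁ C₂ cη Cη : ℝ)
    (hCβ0 : 0 ≤ Cβ0) (hCu : 0 ≤ Cu) (hC₁ : 0 < C₁) (hC₂ : 0 < C₂)
    (hcη : 0 < cη) (hcηCη : cη ≤ Cη) (hcητ : cη < min τ (1 - τ)) :
    (∃! p : ℝ × ℝ × ℝ, p ∈ asymBox Cβ0 Cu C₁ ∧
        IsMinOn (asymFmax τ γ Pε Pβ ν cη Cη C₂) (asymBox Cβ0 Cu C₁) p) ∧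
    (∀ p ∈ asymBox Cβ0 Cu C₁,
      IsMinOn (asymFmax τ γ Pε Pβ ν cη Cη C₂) (asymBox Cβ0 Cu C₁) p →
        0 < p.2.1 → 0 < p.2.2) := by
  have hτ : τ ∈ Set.Icc (0 : ℝ) 1 := by
    obtain ⟨hτ₀, hτ₁⟩ := lt_min_iff.1 hcητ
    constructor <;> linarith
  have hbox := asymBox_subset_saddleDomain Cβ0 Cu C₁
  refine ⟨existsUnique_isMinOn_of_strictConvexOn (isCompact_asymBox Cβ0 Cu C₁)
    ⟨(0, 0, 0), by simp [asymBox, hCβ0, hCu, hC₁.le]⟩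
    ((strictConvexOn_asymFmax hτ hγ.le hPε hν hνfin hcη hcηCη hC₂).subset hbox
      (convex_asymBox Cβ0 Cu C₁))
    ((lowerSemicontinuousOn_asymFmax hτ hγ.le hPε hν hνfin hνcont hcη).mono hbox), ?_⟩
  rintro ⟨β, M, ρ⟩ ⟨hβ, hM', hρ⟩ hmin hM
  refine hρ.1.lt_of_ne fun hρ₀ => ?_
  obtain rfl : 0 = ρ := hρ₀
  have hlt := eventually_asymFmax_lt hτ hγ hPε hPβ2 hν hνfin hνconj hcη hcηCη hC₂ hcητ β hM
  obtain ⟨t, htlt, ht⟩ := (hlt.and (Ioc_mem_nhdsGT hC₁)).exists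
  exact htlt.not_ge (hmin ⟨hβ, hM', Set.Ioc_subset_Icc_self ht⟩)

/-- Lemma 13 of the paper, unique solution of the asymptotic program.  Fix
constants `C_{β₀}, C_u, C₁, C₂, C_η, c_η > 0` with `C_η > c_η` and
`c_η < √((1/2)·min{τ², (1−τ)²})`.  Then the asymptotic program — minimize over the box
`|β₀| ≤ C_{β₀}`, `0 ≤ M_u ≤ C_u`, `0 ≤ ρ₁ ≤ C₁` the inner maximum over `ρ₂ ∈ (0, C₂]`,
`M_η ∈ [c_η, C_η]` of `A` — admits a unique minimizing triple `(β₀*, M_u*, ρ₁*)`; moreover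
`M_u* > 0` implies `ρ₁* > 0`. -/
theorem asym_program_unique_solution
    (τ γ : ℝ) (hτ : τ ∈ Set.Ioo (0 : ℝ) 1) (hγ : γ ∈ Set.Ioo (0 : ℝ) (2 / Real.pi))
    (Pε Pβ : Measure ℝ) [IsProbabilityMeasure Pε] [IsProbabilityMeasure Pβ]
    (hPε : NoiseAssumption Pε) (hPβ2 : Integrable (fun x => x ^ 2) Pβ)
    (ν : ℝ → ℝ) (hν : ConvexOn ℝ Set.univ ν)
    (hνfin : ∀ (c ρ : ℝ), 0 ≤ ρ →
      Integrable (fun z : ℝ × ℝ => moreau ν (c * z.1 + γ * z.2) ρ)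
        ((gaussianReal 0 1).prod Pβ))
    (hνcont : ContinuousOn
      (fun q : ℝ × ℝ =>
        ∫ z, moreau ν (q.1 * z.1 + γ * z.2) q.2 ∂((gaussianReal 0 1).prod Pβ))
      (Set.univ ×ˢ Set.Ici 0))
    (hνconj : ConjDerivAssumption γ Pβ ν)
    (Cβ0 Cu C₁ C₂ cη Cη : ℝ)
    (hCβ0 : 0 < Cβ0) (hCu : 0 < Cu) (hC₁ : 0 < C₁) (hC₂ : 0 < C₂)
    (hcη : 0 < cη) (hcηCη : cη < Cη)
    (hcη' : cη < Real.sqrt ((1 / 2) * min (τ ^ 2) ((1 - τ) ^ 2))) :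
    (∃! p : ℝ × ℝ × ℝ, p ∈ asymBox Cβ0 Cu C₁ ∧
        IsMinOn (asymFmax τ γ Pε Pβ ν cη Cη C₂) (asymBox Cβ0 Cu C₁) p) ∧
    (∀ p ∈ asymBox Cβ0 Cu C₁,
      IsMinOn (asymFmax τ γ Pε Pβ ν cη Cη C₂) (asymBox Cβ0 Cu C₁) p →
        0 < p.2.1 → 0 < p.2.2) := by
  have := hPε.isOpenPosMeasure
  exact asym_program_unique_solution_general τ γ hγ.1 Pε Pβ hPε.integrable_id hPβ2
    ν hν hνfin hνcont hνconj Cβ0 Cu C₁ C₂ cη Cη hCβ0.le hCu.le hC₁ hC₂ hcη hcηCη.le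
    (hcη'.trans_le (sqrt_half_min_sq_le hτ.1.le (sub_nonneg.2 hτ.2.le)))

end
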